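/- arXiv:2001.07017 — 2 statements merged into one kernel-verified Lean document; each statement's English description precedes it below -/
import Mathlib

section
/- For every bounded set B ⊂ ℝ^d there exists a Schwartz function V₀ : ℝ^d → [0,∞) such that V₀(x) ≥ 1 for all x ∈ B, and the Fourier transform V̂₀(ξ) := ∫_{ℝ^d} V₀(x) e(⟨ξ,x⟩) dx vanishes whenever ‖ξ‖_∞ > 1. -/
/-!
Take a smooth bump `ψ ≥ 0` on Euclidean space, of integral `1` and supported in a ball of small
radius `δ` about the origin, and put `V₀ = 4 |ψ̂|²`. This is a nonnegative Schwartz function. When `δ`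
is small compared with the reciprocal of the size of `B`, the phases in `ψ̂(x)`, `x ∈ B`, are close
to `0`, so `|ψ̂(x)| ≥ 1/2` and `V₀(x) ≥ 1` (`half_le_norm_fourier`). By Plancherel, `V̂₀(ξ)` is a
multiple of the correlation of `ψ` with its translate by `ξ`, which vanishes when `‖ξ‖ ≥ 2δ`
(`integral_normSq_fourier_mul_eq_zero`); this is applied with `2δ < 1`, the Euclidean norm being at
least the sup norm. Since `Fin d → ℝ` carries the sup norm, the construction is made on
`EuclideanSpace ℝ (Fin d)` and pulled back along the volume-preserving identification of the two.
-/

open scoped BigOperators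

noncomputable section

/-- `e(z) = exp(2πiz)`. -/
noncomputable def eC (z : ℝ) : ℂ := Complex.exp (2 * Real.pi * Complex.I * z)

open MeasureTheory FourierTransform

theorem exists_real_schwartz_normSq {E : Type*} [NormedAddCommGroup E] [NormedSpace ℝ E]
    (F : SchwartzMap E ℂ) (c : ℝ) : ∃ W : SchwartzMap E ℝ, ∀ x, W x = c * ‖F x‖ ^ 2 := by
  refine ⟨c • SchwartzMap.pairing (innerSL ℝ) F F, fun x => ?_⟩
  have h : innerSL ℝ (F x) (F x) = ‖F x‖ ^ 2 := real_inner_self_eq_norm_sq (F x)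
  simp [h]

/-- The lower bound: if on the support of `ψ` the phase `2π⟪v, x⟫` has absolute value
at most `1`, its cosine is at least `1/2` there, so `Re ψ̂(x) ≥ (1/2) ∫ ψ`. -/
theorem half_le_norm_fourier {E : Type*} [NormedAddCommGroup E] [InnerProductSpace ℝ E]
    [MeasurableSpace E] [BorelSpace E] [FiniteDimensional ℝ E]
    {ψ : E → ℝ} (h0 : ∀ v, 0 ≤ ψ v) (hint : Integrable ψ) (h1 : ∫ v, ψ v = 1)
    {x : E} (hx : ∀ v, ψ v ≠ 0 → |2 * Real.pi * inner ℝ v x| ≤ 1) :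
    1 / 2 ≤ ‖𝓕 (fun v => (ψ v : ℂ)) x‖ := by
  refine le_trans ?_ (Complex.re_le_norm _)
  have hi : Integrable (fun v : E =>
      Complex.exp ((↑(-2 * Real.pi * inner ℝ v x) * Complex.I)) • (ψ v : ℂ)) := by
    refine hint.ofReal.bdd_mul (c := 1) (by fun_prop) (Filter.Eventually.of_forall fun v => ?_)
    rw [Complex.norm_exp_ofReal_mul_I]
  rw [Real.fourier_eq', ← RCLike.re_eq_complex_re, ← integral_re hi]
  calc (1 / 2 : ℝ) = ∫ v, 1 / 2 * ψ v := by rw [integral_const_mul, h1, mul_one]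
    _ ≤ _ := by
      refine integral_mono (hint.const_mul _) hi.re fun v => ?_
      have hre : RCLike.re (Complex.exp ((↑(-2 * Real.pi * inner ℝ v x) * Complex.I)) • (ψ v : ℂ))
          = Real.cos (2 * Real.pi * inner ℝ v x) * ψ v := by
        rw [smul_eq_mul, RCLike.re_eq_complex_re, Complex.re_mul_ofReal,
          Complex.exp_ofReal_mul_I_re, neg_mul, neg_mul, Real.cos_neg]
      simp only [hre]
      by_cases hv : ψ v = 0
      · simp [hv]
      · refine mul_le_mul_of_nonneg_right ?_ (h0 v)
        have h := Real.one_sub_sq_div_two_le_cos (x := 2 * Real.pi * inner ℝ v x)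
        have h2 := (sq_le_one_iff_abs_le_one _).2 (hx v hv)
        linarith

/-- By Plancherel, the Fourier transform of `|ψ̂|²` at `ξ` is the correlation of `ψ` with its
translate by `ξ`; it vanishes as soon as the two have disjoint supports. -/
theorem integral_normSq_fourier_mul_eq_zero {E : Type*} [NormedAddCommGroup E]
    [InnerProductSpace ℝ E] [MeasurableSpace E] [BorelSpace E] [FiniteDimensional ℝ E]
    (ψ : SchwartzMap E ℂ) (ξ : E) (h : ∀ v, ψ (v - ξ) = 0 ∨ ψ v = 0) :
    ∫ x, ((‖𝓕 ψ x‖ ^ 2 : ℝ) : ℂ) * eC (inner ℝ ξ x) = 0 := by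
  set ψ' : SchwartzMap E ℂ := SchwartzMap.compSubConstCLM ℂ ξ ψ with hψ'
  have hF : ∀ x, 𝓕 ψ' x = (starRingEnd ℂ) (eC (inner ℝ ξ x)) * 𝓕 ψ x := by
    intro x
    rw [SchwartzMap.fourier_coe, SchwartzMap.fourier_coe, Real.fourier_eq', Real.fourier_eq',
      ← integral_add_right_eq_self _ ξ, ← integral_const_mul]
    refine integral_congr_ae (Filter.Eventually.of_forall fun v => ?_)
    simp only [hψ', SchwartzMap.compSubConstCLM_apply, add_sub_cancel_right, smul_eq_mul, eC,
      ← mul_assoc]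
    rw [← Complex.exp_conj, ← Complex.exp_add]
    congr 2
    simp only [inner_add_left, map_mul, Complex.conj_ofReal, Complex.conj_I, map_ofNat,
      Complex.ofReal_mul, Complex.ofReal_add, Complex.ofReal_neg, Complex.ofReal_ofNat]
    ring
  have hP := SchwartzMap.integral_inner_fourier_fourier ψ' ψ
  have hz : ∫ v, inner ℂ (ψ' v) (ψ v) = 0 := by
    rw [← integral_zero E ℂ]
    refine integral_congr_ae (Filter.Eventually.of_forall fun v => ?_)
    rcases h v with h | h <;> simp [hψ', h]
  rw [hz] at hP
  rw [← hP]
  refine integral_congr_ae (Filter.Eventually.of_forall fun x => ?_)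
  simp only [hF, RCLike.inner_apply, map_mul, Complex.conj_conj]
  rw [Complex.ofReal_pow, ← Complex.mul_conj']
  ring

/-- for every bounded `B ⊂ ℝ^d` there is a nonnegative Schwartz function
`V₀` with `V₀ ≥ 1` on `B`, whose Fourier transform vanishes outside `‖ξ‖_∞ ≤ 1`. -/
theorem majorant_with_band_limited_fourier
    (d : ℕ) (hd : 0 < d) (B : Set (Fin d → ℝ)) (hB : Bornology.IsBounded B) :
    ∃ V₀ : SchwartzMap (Fin d → ℝ) ℝ,
      (∀ x, 0 ≤ V₀ x) ∧
      (∀ x ∈ B, 1 ≤ V₀ x) ∧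
      (∀ ξ : Fin d → ℝ, (∃ j, 1 < |ξ j|) →
        ∫ x : Fin d → ℝ, (V₀ x : ℂ) * eC (∑ j, ξ j * x j) = 0) := by
  let L : (Fin d → ℝ) ≃L[ℝ] EuclideanSpace ℝ (Fin d) := (EuclideanSpace.equiv (Fin d) ℝ).symm
  have hL : ∀ x, L x = WithLp.toLp 2 x := fun x => rfl
  -- A bound for `B` in the Euclidean norm.
  obtain ⟨R, hR0, hR⟩ : ∃ R : ℝ, 0 < R ∧ ∀ x ∈ B, ‖L x‖ ≤ R := by
    obtain ⟨R, hR0, hR⟩ := (L.lipschitz.isBounded_image hB).exists_pos_norm_le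
    exact ⟨R, hR0, fun x hx => hR _ ⟨x, hx, rfl⟩⟩
  -- Since `δ ≤ 1/8`, the supports of `ψ` and its translate by `ξ` are disjoint once `‖ξ‖ > 1/4`;
  -- since `δ ≤ 1/(8R)`, the phases `2π⟪v, x⟫` stay in `[-1, 1]` for `x ∈ B`, since `2π ≤ 8`.
  set δ : ℝ := 1 / (8 * (R + 1)) with hδ
  have hδ0 : 0 < δ := by positivity
  have hδR : 8 * δ * (R + 1) = 1 := by rw [hδ]; field_simp
  let φ : ContDiffBump (0 : EuclideanSpace ℝ (Fin d)) := ⟨δ / 2, δ, by linarith, by linarith⟩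
  set ψ : EuclideanSpace ℝ (Fin d) → ℝ := φ.normed volume with hψ
  have hsupp : ∀ v, ψ v ≠ 0 → ‖v‖ < δ := by
    intro v hv
    have : v ∈ Function.support (φ.normed volume) := hv
    rwa [φ.support_normed_eq, mem_ball_zero_iff] at this
  have hcs : HasCompactSupport (fun v => (ψ v : ℂ)) :=
    φ.hasCompactSupport_normed.comp_left Complex.ofReal_zero
  have hsm : ContDiff ℝ (⊤ : ℕ∞) (fun v => (ψ v : ℂ)) :=
    Complex.ofRealCLM.contDiff.comp φ.contDiff_normed
  let Ψ : SchwartzMap (EuclideanSpace ℝ (Fin d)) ℂ := hcs.toSchwartzMap hsm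
  have hΨ : ∀ v, Ψ v = (ψ v : ℂ) := fun v => rfl
  obtain ⟨W, hW⟩ := exists_real_schwartz_normSq (𝓕 Ψ) 4
  have hV : ∀ x, SchwartzMap.compCLMOfContinuousLinearEquiv ℝ L W x = 4 * ‖𝓕 Ψ (L x)‖ ^ 2 :=
    fun x => hW (L x)
  refine ⟨SchwartzMap.compCLMOfContinuousLinearEquiv ℝ L W, ?_, ?_, ?_⟩
  · intro x
    rw [hV]
    positivity
  · intro x hx
    have h := half_le_norm_fourier (ψ := ψ) φ.nonneg_normed φ.integrable_normed φ.integral_normed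
      (x := L x) (fun v hv => by
        have h1 : |inner ℝ v (L x)| ≤ δ * R := (abs_real_inner_le_norm v (L x)).trans
          (mul_le_mul (hsupp v hv).le (hR x hx) (norm_nonneg _) hδ0.le)
        rw [abs_mul, abs_of_pos Real.two_pi_pos]
        have := Real.pi_le_four
        calc 2 * Real.pi * |inner ℝ v (L x)| ≤ 8 * (δ * R) := by
              apply mul_le_mul <;> first | linarith | positivity
          _ ≤ 1 := by linarith)
    rw [hV]
    have h' : 1 / 2 ≤ ‖𝓕 Ψ (L x)‖ := h
    nlinarith
  · rintro ξ ⟨j, hj⟩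
    have hξ : 1 < ‖L ξ‖ := hj.trans_le (PiLp.norm_apply_le (L ξ) j)
    have hzero := integral_normSq_fourier_mul_eq_zero Ψ (L ξ) (fun v => by
      by_contra! hc
      have h1 := hsupp (v - L ξ) (fun h => hc.1 (by rw [hΨ, h, Complex.ofReal_zero]))
      have h2 := hsupp v (fun h => hc.2 (by rw [hΨ, h, Complex.ofReal_zero]))
      have h3 : ‖L ξ‖ ≤ ‖v‖ + ‖v - L ξ‖ := by
        simpa using norm_sub_le v (v - L ξ)
      nlinarith [mul_pos hδ0 hR0])
    rw [← (PiLp.volume_preserving_toLp (Fin d)).integral_comp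
      (MeasurableEquiv.toLp 2 (Fin d → ℝ)).measurableEmbedding] at hzero
    calc _ = ∫ x : Fin d → ℝ, 4 * (((‖𝓕 Ψ (L x)‖ ^ 2 : ℝ) : ℂ) * eC (inner ℝ (L ξ) (L x))) := by
          refine integral_congr_ae (Filter.Eventually.of_forall fun x => ?_)
          have hin : inner ℝ (L ξ) (L x) = ∑ j, ξ j * x j := by
            simp [hL, PiLp.inner_apply, mul_comm]
          simp only [hV, hin]
          push_cast
          ring
      _ = 0 := by
          rw [integral_const_mul]
          exact mul_eq_zero_of_right _ hzero
end
end

section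
/- Let 𝔱 be a nonzero integral ideal of O_K, let α, β ∈ 𝔱⁻¹ and let q ∈ O_K∖{0}. Then #{n ∈ O_K/(q) : αn + β ∈ q·𝔱⁻¹} ≤ N(α𝔱 + (q)), where α𝔱 + (q) is the integral ideal of O_K generated by the set α𝔱 together with q, and N denotes the absolute ideal norm (the condition αn + β ∈ q𝔱⁻¹ is well defined on residue classes mod (q)). -/
/-!
Write `J = α𝔱 + (q)`, an integral ideal containing `q`, so `(q) = J * M` for some ideal `M`.
If `n, n'` are two solutions then `α (n - n') ∈ q𝔱⁻¹`, i.e. `(n - n') α𝔱 ⊆ (q)`, hence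
`(n - n') J ⊆ (q) = J * M` and `n - n' ∈ M` after cancelling `J`.  Solutions that are distinct
modulo `q` thus give distinct elements of a single coset of `M / (q)`, a group of order
`N(q) / N(M) = N(J)`; this count is `ncard_le_absNorm_of_sub_mem`.
-/

open scoped BigOperators nonZeroDivisors
open NumberField

noncomputable section

/-- Elements that are pairwise congruent modulo `M` and pairwise incongruent modulo `J * M`
number at most `N(J)`, the order of `M / (J * M)`. -/
lemma ncard_le_absNorm_of_sub_mem {A : Type*} [CommRing A] [IsDedekindDomain A]
    [Module.Free ℤ A] [Module.Finite ℤ A] [CharZero A]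
    (J M : Ideal A) (hJM : J * M ≠ ⊥) (S : Set A)
    (hM : ∀ x ∈ S, ∀ y ∈ S, x - y ∈ M)
    (hinj : ∀ x ∈ S, ∀ y ∈ S, x - y ∈ J * M → x = y) :
    S.ncard ≤ Ideal.absNorm J := by
  have hJ0 : J ≠ ⊥ := by rintro rfl; simp at hJM
  have hM0 : M ≠ ⊥ := by rintro rfl; simp at hJM
  have hrel : (J * M).toAddSubgroup.relIndex M.toAddSubgroup = Ideal.absNorm J := by
    have hle : (J * M).toAddSubgroup ≤ M.toAddSubgroup :=
      Submodule.toAddSubgroup_mono Ideal.mul_le_right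
    have h1 := AddSubgroup.relIndex_mul_index hle
    have h2 : Ideal.absNorm (J * M) = Ideal.absNorm J * Ideal.absNorm M := map_mul _ _ _
    have h3 : Ideal.absNorm M ≠ 0 := by rwa [Ne, Ideal.absNorm_eq_zero_iff]
    have h4 (I : Ideal A) : I.toAddSubgroup.index = Ideal.absNorm I := rfl
    rw [h4, h4, h2] at h1
    exact mul_right_cancel₀ h3 h1
  -- Translating by a base point `x₀` of `S` embeds `S` into `M / (J * M)`.
  rcases S.eq_empty_or_nonempty with rfl | ⟨x₀, hx₀⟩
  · simp
  let Q := M.toAddSubgroup ⧸ (J * M).toAddSubgroup.addSubgroupOf M.toAddSubgroup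
  have hcard : Nat.card Q = Ideal.absNorm J := hrel
  have hpos : Ideal.absNorm J ≠ 0 := by rwa [Ne, Ideal.absNorm_eq_zero_iff]
  have : Finite Q := Nat.finite_of_card_ne_zero (hcard ▸ hpos)
  let f : S → Q := fun x => QuotientAddGroup.mk ⟨x.1 - x₀, hM _ x.2 _ hx₀⟩
  have hf : Function.Injective f := by
    intro x y hxy
    have h := QuotientAddGroup.eq.mp hxy
    rw [AddSubgroup.mem_addSubgroupOf] at h
    have h' : y.1 - x.1 ∈ J * M := by
      have : -(x.1 - x₀) + (y.1 - x₀) ∈ J * M := h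
      convert this using 1; ring
    exact Subtype.ext (hinj _ y.2 _ x.2 h').symm
  rw [← hcard, ← Nat.card_coe_set_eq]
  exact Nat.card_le_card_of_injective f hf

/-- for `α, β ∈ 𝔱⁻¹`, the number of residue classes `n mod (q)` with
`αn + β ∈ q𝔱⁻¹` is at most `N(α𝔱 + (q))`.  Residue classes are represented by an
arbitrary complete set of representatives `R` of `𝓞 K mod (q)`. -/
theorem solution_count_gcd
    (K : Type) [Field K] [NumberField K]
    (𝔱 : Ideal (𝓞 K)) (h𝔱 : 𝔱 ≠ ⊥)
    (α β : K)
    (hα : α ∈ ((𝔱 : FractionalIdeal (𝓞 K)⁰ K))⁻¹)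
    (hβ : β ∈ ((𝔱 : FractionalIdeal (𝓞 K)⁰ K))⁻¹)
    (q : 𝓞 K) (hq : q ≠ 0)
    (R : Finset (𝓞 K))
    (hR : ∀ n : 𝓞 K, ∃! r : 𝓞 K, r ∈ R ∧ q ∣ (n - r)) :
    (({n ∈ (R : Set (𝓞 K)) |
        α * algebraMap (𝓞 K) K n + β ∈
          FractionalIdeal.spanSingleton (𝓞 K)⁰ (algebraMap (𝓞 K) K q) *
            ((𝔱 : FractionalIdeal (𝓞 K)⁰ K))⁻¹}).ncard : ℝ) ≤
      ((FractionalIdeal.absNorm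
          (FractionalIdeal.spanSingleton (𝓞 K)⁰ α * (𝔱 : FractionalIdeal (𝓞 K)⁰ K) +
            FractionalIdeal.spanSingleton (𝓞 K)⁰ (algebraMap (𝓞 K) K q)) : ℚ) : ℝ) := by
  have ht0 : (𝔱 : FractionalIdeal (𝓞 K)⁰ K) ≠ 0 := FractionalIdeal.coeIdeal_ne_zero.mpr h𝔱
  have hcancel := inv_mul_cancel₀ ht0
  set T : FractionalIdeal (𝓞 K)⁰ K := (𝔱 : FractionalIdeal (𝓞 K)⁰ K) with hT
  have hαT : FractionalIdeal.spanSingleton (𝓞 K)⁰ α * T ≤ 1 := by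
    rw [← hcancel]
    exact mul_le_mul_left (FractionalIdeal.spanSingleton_le_iff_mem.mpr hα) T
  have hq1 : FractionalIdeal.spanSingleton (𝓞 K)⁰ (algebraMap (𝓞 K) K q) ≤ 1 :=
    FractionalIdeal.spanSingleton_le_iff_mem.mpr (FractionalIdeal.coe_mem_one _ q)
  obtain ⟨J, hJ⟩ := FractionalIdeal.le_one_iff_exists_coeIdeal.mp (sup_le hαT hq1)
  rw [FractionalIdeal.sup_eq_add] at hJ
  rw [← hJ, FractionalIdeal.coeIdeal_absNorm]
  have hqJ : Ideal.span {q} ≤ J := by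
    rw [← FractionalIdeal.coeIdeal_le_coeIdeal K, hJ, FractionalIdeal.coeIdeal_span_singleton,
      ← FractionalIdeal.sup_eq_add]
    exact le_sup_right
  obtain ⟨M, hM⟩ := Ideal.dvd_iff_le.mpr hqJ
  have hJM : J * M ≠ ⊥ := by
    rw [← hM]; simpa [Ideal.span_singleton_eq_bot] using hq
  have hJ0 : J ≠ 0 := by rintro rfl; simp at hJM
  -- The condition `αd ∈ q𝔱⁻¹` says `dα𝔱 ⊆ (q)`; as `dq ∈ (q)` too, `dJ ⊆ (q) = JM`; cancel `J`.
  have key : ∀ d : 𝓞 K, α * algebraMap (𝓞 K) K d ∈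
      FractionalIdeal.spanSingleton (𝓞 K)⁰ (algebraMap (𝓞 K) K q) * T⁻¹ → d ∈ M := by
    intro d hd
    have h1 : FractionalIdeal.spanSingleton (𝓞 K)⁰ (algebraMap (𝓞 K) K d) *
        (FractionalIdeal.spanSingleton (𝓞 K)⁰ α * T) ≤
        FractionalIdeal.spanSingleton (𝓞 K)⁰ (algebraMap (𝓞 K) K q) := by
      have := mul_le_mul_left (FractionalIdeal.spanSingleton_le_iff_mem.mpr hd) T
      rwa [mul_assoc, hcancel, mul_one, mul_comm α,
        ← FractionalIdeal.spanSingleton_mul_spanSingleton, mul_assoc] at this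
    have h2 : FractionalIdeal.spanSingleton (𝓞 K)⁰ (algebraMap (𝓞 K) K d) *
        FractionalIdeal.spanSingleton (𝓞 K)⁰ (algebraMap (𝓞 K) K q) ≤
        FractionalIdeal.spanSingleton (𝓞 K)⁰ (algebraMap (𝓞 K) K q) := by
      rw [FractionalIdeal.spanSingleton_mul_spanSingleton,
        FractionalIdeal.spanSingleton_le_iff_mem, FractionalIdeal.mem_spanSingleton]
      exact ⟨d, by rw [Algebra.smul_def]⟩
    have h3 : Ideal.span {d} * J ≤ Ideal.span {q} := by
      rw [← FractionalIdeal.coeIdeal_le_coeIdeal K, FractionalIdeal.coeIdeal_mul, hJ,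
        FractionalIdeal.coeIdeal_span_singleton, FractionalIdeal.coeIdeal_span_singleton, mul_add,
        ← FractionalIdeal.sup_eq_add]
      exact sup_le h1 h2
    rw [hM, mul_comm, ← Ideal.dvd_iff_le] at h3
    have h4 := Ideal.dvd_iff_le.mp ((mul_dvd_mul_iff_left hJ0).mp h3)
    exact (Ideal.span_singleton_le_iff_mem _).mp h4
  have main := ncard_le_absNorm_of_sub_mem J M hJM
    {n ∈ (R : Set (𝓞 K)) | α * algebraMap (𝓞 K) K n + β ∈
      FractionalIdeal.spanSingleton (𝓞 K)⁰ (algebraMap (𝓞 K) K q) * T⁻¹} ?_ ?_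
  · exact_mod_cast main
  · rintro x ⟨-, hx⟩ y ⟨-, hy⟩
    apply key
    have := Submodule.sub_mem _ (FractionalIdeal.mem_coe.mpr hx) (FractionalIdeal.mem_coe.mpr hy)
    rw [FractionalIdeal.mem_coe] at this
    convert this using 1
    rw [map_sub]; ring
  · rintro x ⟨hx, -⟩ y ⟨hy, -⟩ hxy
    rw [← hM, Ideal.mem_span_singleton] at hxy
    exact (hR x).unique ⟨hx, by simp⟩ ⟨hy, hxy⟩
end
end
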